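/- arXiv:2308.01534 — 6 statements merged into one kernel-verified Lean document; each statement's English description precedes it below -/
import Mathlib

section
/- For every instance of unweighted complete correlation clustering there exists a single clustering 𝒞* of V such that simultaneously for every p ∈ [1,∞) and for p = ∞, ‖y_{𝒞*}‖_p ≤ 6348 · OPT(p). -/
/-!
The clustering groups vertices with nearly equal positive neighbourhoods. Vertices `u`, `v` *agree*
if `|N_u ∆ N_v|` is at most a twentieth of `Δ_u + Δ_v`, and a vertex is *heavy* if it agrees with
all but a twentieth of `N_u`; write `A_h` for the neighbours agreeing with `h`. Being linked
(`A_h` meets `A_h'`) is an equivalence relation on heavy vertices, because the symmetric difference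
satisfies the triangle inequality (`linked_trans`). A vertex of some `A_h` with `h` heavy joins
the class of `h`, and every other vertex is a singleton.

Compare with an arbitrary clustering, with disagreement vector `y`.
* A cut positive edge at a heavy vertex joins two vertices that do not agree, and a light vertex has
  at least `Δ_u / 20` neighbours it does not agree with. If the other clustering does not cut a
  non-agreeing edge `uv`, each vertex of `N_u ∆ N_v` is a disagreement at `u` or at `v`, so
  `y u + y v ≥ (Δ_u + Δ_v) / 20`, which pays for the edge.
* If a negative edge `uv` lies inside a cluster `C`, then `|N_u ∩ N_v| ≥ |C| / 6`. If the other
  clustering separates `u` and `v`, each vertex of `N_u ∩ N_v` is a disagreement at `u` or at `v`,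
  so `y u + y v ≥ |C| / 6`.

Summing up, the disagreement vector of the clustering is bounded pointwise by `M y` for a symmetric
nonnegative matrix `M` with row sums at most `833` (`disag_le`, `chargeMatrix_row`). Jensen's
inequality shows that such a matrix has norm at most `833` on every `ℓ_p` (`lp_le_of_matrix`).
-/

open Finset

noncomputable section

variable {V : Type*} [Fintype V] [DecidableEq V]

/-- Positive neighborhood of `u` (including the positive self-loop at `u`). -/
def Nplus (E : V → V → Prop) [DecidableRel E] (u : V) : Finset V :=
  insert u (Finset.univ.filter fun v => v ≠ u ∧ E u v)

/-- Negative neighborhood of `u`. -/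
def Nminus (E : V → V → Prop) [DecidableRel E] (u : V) : Finset V :=
  Finset.univ.filter fun v => v ≠ u ∧ ¬ E u v

/-- The correlation metric `d`. -/
def corrDist (E : V → V → Prop) [DecidableRel E] (u v : V) : ℝ :=
  if u = v then 0
  else 1 - ((Nplus E u ∩ Nplus E v).card : ℝ) / ((Nplus E u ∪ Nplus E v).card : ℝ)

/-- The set `R₁` of vertices `u` with `|N_u^- ∩ {v : d_uv ≤ 0.7}| ≥ (10/3)·Δ_u`. -/
def R1set (E : V → V → Prop) [DecidableRel E] : Finset V :=
  Finset.univ.filter fun u =>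
    (10 / 3 : ℝ) * (Nplus E u).card ≤ ((Nminus E u).filter fun v => corrDist E u v ≤ 0.7).card

/-- The adjusted correlation metric `f`: start from `d`, round negative edges with
`d > 0.7` up to `1`, and set `f_uv = 1` for all `v ≠ u` whenever `u ∈ R₁`. -/
def adjDist (E : V → V → Prop) [DecidableRel E] (u v : V) : ℝ :=
  if u = v then 0
  else if u ∈ R1set E ∨ v ∈ R1set E then 1
  else if ¬ E u v ∧ 0.7 < corrDist E u v then 1
  else corrDist E u v

/-- A clustering is encoded by a map `c : V → V`; the cluster `C(u)` is the fiber of `c` at `u`. -/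
def clusterOf (c : V → V) (u : V) : Finset V :=
  Finset.univ.filter fun w => c w = c u

/-- The number of disagreements incident to `u` with respect to the clustering `c`. -/
def disag (E : V → V → Prop) [DecidableRel E] (c : V → V) (u : V) : ℕ :=
  (Finset.univ.filter fun v =>
    v ≠ u ∧ ((E u v ∧ c u ≠ c v) ∨ (¬ E u v ∧ c u = c v))).card

/-- `OPT(1)`: the minimum total number of disagreements over all clusterings. -/
def OPT1 (E : V → V → Prop) [DecidableRel E] : ℕ :=
  Finset.univ.inf' ⟨id, Finset.mem_univ id⟩ fun c : V → V => ∑ u, disag E c u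

/-- `OPT(p)`: the minimum `ℓ_p`-norm of the disagreement vector over all clusterings. -/
def OPTlp (E : V → V → Prop) [DecidableRel E] (p : ℝ) : ℝ :=
  Finset.univ.inf' ⟨id, Finset.mem_univ id⟩ fun c : V → V =>
    (∑ u, (disag E c u : ℝ) ^ p) ^ (1 / p)

/-- `OPT(∞)`: the minimum `ℓ_∞`-norm of the disagreement vector over all clusterings. -/
def OPTinf (E : V → V → Prop) [DecidableRel E] : ℕ :=
  Finset.univ.inf' ⟨id, Finset.mem_univ id⟩ fun c : V → V => Finset.univ.sup (disag E c)

/-- The set of bad triangles: triples of distinct vertices spanning exactly two positive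
edges and one negative edge. -/
def badTriangles (E : V → V → Prop) [DecidableRel E] : Finset (Finset V) :=
  Finset.univ.filter fun T =>
    ∃ u v w : V, u ≠ v ∧ u ≠ w ∧ v ≠ w ∧ T = {u, v, w} ∧ E u v ∧ E u w ∧ ¬ E v w

/-! ### Agreement and heavy vertices -/

/-- The size of `N_u ∆ N_v`: the number of vertices that distinguish the positive neighbourhoods of `u` and `v`. -/
def sdist (E : V → V → Prop) [DecidableRel E] (u v : V) : ℕ :=
  (symmDiff (Nplus E u) (Nplus E v)).card

/-- The positive neighbours (including `h` itself) whose neighbourhood nearly equals that of `h`. -/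
def agreeing (E : V → V → Prop) [DecidableRel E] (h : V) : Finset V :=
  (Nplus E h).filter fun v => 20 * sdist E h v ≤ (Nplus E h).card + (Nplus E v).card

/-- `h` is heavy and `u` is one of its agreeing neighbours. -/
def Near (E : V → V → Prop) [DecidableRel E] (u h : V) : Prop :=
  19 * (Nplus E h).card ≤ 20 * (agreeing E h).card ∧ u ∈ agreeing E h

/-- Two heavy vertices with a common agreeing neighbour. -/
def Linked (E : V → V → Prop) [DecidableRel E] (h h' : V) : Prop :=
  ∃ x, Near E x h ∧ Near E x h'

section geometry

variable (E : V → V → Prop) [DecidableRel E]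

lemma mem_Nplus (u v : V) : v ∈ Nplus E u ↔ v = u ∨ E u v := by
  simp only [Nplus, mem_insert, mem_filter, mem_univ, true_and]
  tauto

lemma self_mem_Nplus (u : V) : u ∈ Nplus E u := by simp [mem_Nplus]

lemma Nplus_pos (u : V) : 0 < (Nplus E u).card := card_pos.2 ⟨u, self_mem_Nplus E u⟩

lemma sdist_comm (u v : V) : sdist E u v = sdist E v u := by
  unfold sdist; rw [symmDiff_comm]

lemma sdist_triangle (u v w : V) : sdist E u w ≤ sdist E u v + sdist E v w := by
  unfold sdist
  refine (card_le_card ?_).trans (card_union_le _ _)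
  exact symmDiff_triangle _ _ _

lemma card_add_card (u v : V) :
    (Nplus E u).card + (Nplus E v).card = sdist E u v + 2 * (Nplus E u ∩ Nplus E v).card := by
  have h1 := card_sdiff_add_card_inter (Nplus E u) (Nplus E v)
  have h2 := card_sdiff_add_card_inter (Nplus E v) (Nplus E u)
  have h3 : sdist E u v = (Nplus E u \ Nplus E v).card + (Nplus E v \ Nplus E u).card := by
    unfold sdist
    rw [symmDiff_def, sup_eq_union, card_union_of_disjoint disjoint_sdiff_sdiff]
  rw [inter_comm] at h2
  omega

lemma inter_card_le (u v : V) : (Nplus E u ∩ Nplus E v).card ≤ (Nplus E u).card :=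
  card_le_card inter_subset_left

lemma card_le_add (u v : V) : (Nplus E u).card ≤ (Nplus E v).card + sdist E u v := by
  have h1 := card_add_card E u v
  have h2 := inter_card_le E v u
  rw [inter_comm] at h2
  omega

variable {E}

lemma self_mem_agreeing (h : V) : h ∈ agreeing E h := by
  refine mem_filter.2 ⟨self_mem_Nplus E h, ?_⟩
  simp [sdist]

lemma near_bounds {u h : V} (H : Near E u h) :
    20 * sdist E h u ≤ (Nplus E h).card + (Nplus E u).card ∧
    (Nplus E h).card ≤ (Nplus E u).card + sdist E h u ∧
    (Nplus E u).card ≤ (Nplus E h).card + sdist E h u := by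
  have h1 := (mem_filter.1 H.2).2
  have h2 := card_le_add E h u
  have h3 := card_le_add E u h
  rw [sdist_comm E u h] at h3
  exact ⟨h1, h2, h3⟩

lemma near_self {u h : V} (H : Near E u h) : Near E h h := ⟨H.1, self_mem_agreeing h⟩

lemma linked_symm {h h' : V} (H : Linked E h h') : Linked E h' h := by
  obtain ⟨x, a, b⟩ := H; exact ⟨x, b, a⟩

/-- Linked heavy vertices are close, so a chain of two links still leaves the neighbourhoods
overlapping so much that the agreeing parts must meet. -/
lemma linked_trans {h₁ h₂ h₃ : V} (H : Linked E h₁ h₂) (H' : Linked E h₂ h₃) :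
    Linked E h₁ h₃ := by
  obtain ⟨x, a, b⟩ := H
  obtain ⟨y, c, d⟩ := H'
  by_contra hcon
  have hdis : Disjoint (agreeing E h₁) (agreeing E h₃) := by
    rw [Finset.disjoint_left]
    intro z hz hz'
    exact hcon ⟨z, ⟨a.1, hz⟩, ⟨d.1, hz'⟩⟩
  have hsub : agreeing E h₁ ∪ agreeing E h₃ ⊆ Nplus E h₁ ∪ Nplus E h₃ :=
    union_subset_union (filter_subset _ _) (filter_subset _ _)
  have h1 := card_le_card hsub
  rw [card_union_of_disjoint hdis] at h1
  have h2 := card_union_add_card_inter (Nplus E h₁) (Nplus E h₃)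
  have h3 := card_add_card E h₁ h₃
  have t1 := sdist_triangle E h₁ x h₃
  have t2 := sdist_triangle E x h₂ h₃
  have t3 := sdist_triangle E h₂ y h₃
  have := near_bounds a
  have := near_bounds b
  have := near_bounds c
  have := near_bounds d
  have := sdist_comm E x h₂
  have := sdist_comm E y h₃
  have := a.1
  have := d.1
  have := Nplus_pos E h₁
  omega

/-! ### The clustering -/

open Classical in
/-- All heavy vertices linked to a heavy vertex that `u` is near to. -/
def hubs (E : V → V → Prop) [DecidableRel E] (u : V) : Finset V :=
  univ.filter fun h => ∃ h₁, Near E u h₁ ∧ Linked E h₁ h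

/-- The clustering: `u` is sent to a representative of its class of hubs, or to itself if it has
none. -/
def clust (E : V → V → Prop) [DecidableRel E] (u : V) : V :=
  if h : (hubs E u).Nonempty then h.choose else u

lemma mem_hubs {u h : V} : h ∈ hubs E u ↔ ∃ h₁, Near E u h₁ ∧ Linked E h₁ h := by
  simp [hubs]

lemma clust_mem {u : V} (h : (hubs E u).Nonempty) : clust E u ∈ hubs E u := by
  unfold clust; rw [dif_pos h]; exact h.choose_spec

lemma clust_eq_of_near {u v h : V} (hu : Near E u h) (hv : Near E v h) :
    clust E u = clust E v := by
  have key : ∀ {a b : V}, Near E a h → Near E b h → hubs E a ⊆ hubs E b := by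
    intro a b ha hb z hz
    obtain ⟨h₁, n, l⟩ := mem_hubs.1 hz
    exact mem_hubs.2 ⟨h, hb, linked_trans ⟨a, ha, n⟩ l⟩
  have heq : hubs E u = hubs E v := (key hu hv).antisymm (key hv hu)
  have hne : (hubs E v).Nonempty := ⟨h, mem_hubs.2 ⟨h, hv, v, hv, hv⟩⟩
  unfold clust
  simp only [heq, hne, dif_pos]

lemma linked_of_clust_eq {u v : V} (huv : u ≠ v) (h : clust E u = clust E v) :
    ∃ h₁ h₂, Near E u h₁ ∧ Near E v h₂ ∧ Linked E h₁ h₂ := by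
  -- A vertex without hubs is not itself a hub, so it is a singleton cluster.
  have key : ∀ {a b : V}, a ≠ b → clust E a = clust E b → (hubs E b).Nonempty →
      (hubs E a).Nonempty := by
    intro a b _ hab hb
    by_contra hne
    have ha : clust E a = a := by unfold clust; rw [dif_neg hne]
    have hm := clust_mem hb
    rw [← hab, ha] at hm
    obtain ⟨h₁, -, x, -, n⟩ := mem_hubs.1 hm
    exact hne ⟨a, mem_hubs.2 ⟨a, near_self n, a, near_self n, near_self n⟩⟩
  have hu : (hubs E u).Nonempty := by
    by_contra hne
    have hv : ¬ (hubs E v).Nonempty := fun hv => hne (key huv h hv)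
    unfold clust at h
    rw [dif_neg hne, dif_neg hv] at h
    exact huv h
  have hv := key huv.symm h.symm hu
  obtain ⟨h₁, n₁, l₁⟩ := mem_hubs.1 (clust_mem hu)
  obtain ⟨h₂, n₂, l₂⟩ := mem_hubs.1 (clust_mem hv)
  rw [h] at l₁
  exact ⟨h₁, h₂, n₁, n₂, linked_trans l₁ (linked_symm l₂)⟩

lemma agree_inter_card (h w : V) :
    (Nplus E h ∩ Nplus E w).card + (agreeing E h).card ≤
      (agreeing E h ∩ Nplus E w).card + (Nplus E h).card := by
  have h1 := card_union_add_card_inter (Nplus E h ∩ Nplus E w) (agreeing E h)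
  have h2 : (Nplus E h ∩ Nplus E w) ∪ agreeing E h ⊆ Nplus E h :=
    union_subset inter_subset_left (filter_subset _ _)
  have h3 : (Nplus E h ∩ Nplus E w) ∩ agreeing E h ⊆ agreeing E h ∩ Nplus E w := by
    intro z; simp only [mem_inter]; tauto
  have h2 := card_le_card h2
  have h3 := card_le_card h3
  omega

/-- Every member of a cluster is adjacent to at least `Δ_h / 2` vertices of `A_h`, whose
degrees are at most `21/19 · Δ_h`; double counting these edges bounds the cluster size. -/
lemma cluster_card_le (hsymm : ∀ u v, E u v ↔ E v u) {u h : V} (H : Near E u h) :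
    (clusterOf (clust E) u).card ≤ 3 * (Nplus E h).card := by
  set C := clusterOf (clust E) u with hC
  set d := (Nplus E h).card with hd
  have hdpos : 0 < d := Nplus_pos E h
  have hlow : ∀ w ∈ C, d ≤ 2 * (agreeing E h ∩ Nplus E w).card := by
    intro w hw
    have hlink : ∃ h₂, Near E w h₂ ∧ Linked E h h₂ := by
      by_cases hwu : w = u
      · exact ⟨h, hwu ▸ H, u, H, H⟩
      · obtain ⟨k, k₂, n, n₂, l⟩ := linked_of_clust_eq hwu (mem_filter.1 hw).2
        exact ⟨k, n, linked_trans ⟨u, H, n₂⟩ (linked_symm l)⟩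
    obtain ⟨h₂, n₂, x, nx, nx₂⟩ := hlink
    have t1 := sdist_triangle E h x w
    have t2 := sdist_triangle E x h₂ w
    have := near_bounds n₂
    have := near_bounds nx
    have := near_bounds nx₂
    have := sdist_comm E x h₂
    have := card_add_card E h w
    have := agree_inter_card (E := E) h w
    have := H.1
    omega
  have hup : ∀ x ∈ agreeing E h, 19 * (Nplus E x).card ≤ 21 * d := by
    intro x hx
    have := near_bounds (E := E) (u := x) (h := h) ⟨H.1, hx⟩
    omega
  have hA : (agreeing E h).card ≤ d := card_le_card (filter_subset _ _)
  have hdc : ∑ w ∈ C, (agreeing E h ∩ Nplus E w).card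
      = ∑ x ∈ agreeing E h, (C ∩ Nplus E x).card := by
    have := sum_card_bipartiteAbove_eq_sum_card_bipartiteBelow (s := C) (t := agreeing E h)
      (fun w x => x ∈ Nplus E w)
    simp only [bipartiteAbove, bipartiteBelow, filter_mem_eq_inter] at this
    rw [this]
    refine sum_congr rfl fun x _ => ?_
    congr 1
    ext w
    simp only [mem_filter, mem_inter, mem_Nplus, hsymm w x, eq_comm]
  have h1 : C.card * d ≤ 2 * ∑ w ∈ C, (agreeing E h ∩ Nplus E w).card := by
    rw [mul_sum, ← smul_eq_mul]
    exact card_nsmul_le_sum _ _ _ hlow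
  have h2 : 19 * ∑ x ∈ agreeing E h, (C ∩ Nplus E x).card ≤ (agreeing E h).card * (21 * d) := by
    rw [mul_sum, ← smul_eq_mul]
    refine sum_le_card_nsmul _ _ _ fun x hx => le_trans ?_ (hup x hx)
    exact Nat.mul_le_mul_left _ (card_le_card inter_subset_right)
  rw [hdc] at h1
  have h3 : (agreeing E h).card * (21 * d) ≤ d * (21 * d) := Nat.mul_le_mul_right _ hA
  have h4 : C.card * d ≤ 3 * d * d := by nlinarith
  exact Nat.le_of_mul_le_mul_right h4 hdpos

lemma cluster_le_inter (hsymm : ∀ u v, E u v ↔ E v u) {u v : V} (huv : u ≠ v)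
    (h : clust E u = clust E v) :
    (clusterOf (clust E) u).card ≤ 6 * (Nplus E u ∩ Nplus E v).card := by
  obtain ⟨h₁, h₂, n₁, n₂, x, x₁, x₂⟩ := linked_of_clust_eq huv h
  have hc := cluster_card_le hsymm n₁
  have t1 := sdist_triangle E u h₁ v
  have t2 := sdist_triangle E h₁ x v
  have t3 := sdist_triangle E x h₂ v
  have := near_bounds n₁
  have := near_bounds n₂
  have := near_bounds x₁
  have := near_bounds x₂
  have := sdist_comm E u h₁
  have := sdist_comm E x h₂
  have := card_add_card E u v
  omega

/-! ### Disagreements forced on an arbitrary clustering -/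

/-- The set counted by `disag`. -/
def disagSet (E : V → V → Prop) [DecidableRel E] (c : V → V) (u : V) : Finset V :=
  univ.filter fun v => v ≠ u ∧ ((E u v ∧ c u ≠ c v) ∨ (¬ E u v ∧ c u = c v))

lemma mem_disagSet {c : V → V} {u v : V} : v ∈ disagSet E c u ↔
    v ≠ u ∧ ((E u v ∧ c u ≠ c v) ∨ (¬ E u v ∧ c u = c v)) := by
  simp [disagSet]

lemma card_le_disag_add {c : V → V} {u v : V} {S : Finset V}
    (h : S ⊆ disagSet E c u ∪ disagSet E c v) : S.card ≤ disag E c u + disag E c v :=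
  (card_le_card h).trans (card_union_le _ _)

lemma sdist_le_disag (hsymm : ∀ u v, E u v ↔ E v u) {c : V → V} {u v : V}
    (hE : v ∈ Nplus E u) (hc : c u = c v) : sdist E u v ≤ disag E c u + disag E c v := by
  refine card_le_disag_add fun w hw => ?_
  have := hsymm u v
  rw [mem_symmDiff] at hw
  simp only [mem_Nplus] at hw hE
  simp only [mem_union, mem_disagSet]
  grind

lemma inter_le_disag (hsymm : ∀ u v, E u v ↔ E v u) {c : V → V} {u v : V} (huv : u ≠ v)
    (hE : ¬ E u v) (hc : c u ≠ c v) :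
    (Nplus E u ∩ Nplus E v).card ≤ disag E c u + disag E c v := by
  refine card_le_disag_add fun w hw => ?_
  have := hsymm u v
  simp only [mem_inter, mem_Nplus] at hw
  simp only [mem_union, mem_disagSet]
  grind

/-- Positive disagreements are at most twenty times the number of non-agreeing neighbours:
at a heavy vertex every cut edge is non-agreeing, and at a light vertex non-agreeing neighbours
make up a twentieth of all neighbours. -/
lemma pos_card_le (u : V) :
    (univ.filter fun v => v ≠ u ∧ E u v ∧ clust E u ≠ clust E v).card ≤
      20 * (Nplus E u \ agreeing E u).card := by
  have hsub : agreeing E u ⊆ Nplus E u := filter_subset _ _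
  have hs := card_sdiff_add_card_eq_card hsub
  by_cases hh : 19 * (Nplus E u).card ≤ 20 * (agreeing E u).card
  · refine (card_le_card (t := Nplus E u \ agreeing E u) ?_).trans (by omega)
    intro v hv
    simp only [mem_filter, mem_univ, true_and] at hv
    rw [mem_sdiff, mem_Nplus]
    exact ⟨Or.inr hv.2.1, fun hA =>
      hv.2.2 (clust_eq_of_near (h := u) ⟨hh, self_mem_agreeing u⟩ ⟨hh, hA⟩)⟩
  · refine (card_le_card (t := Nplus E u) ?_).trans (by omega)
    intro v hv
    simp only [mem_filter, mem_univ, true_and] at hv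
    rw [mem_Nplus]
    exact Or.inr hv.2.1

/-- A non-agreeing edge `uv` is either cut by `c`, a disagreement at `u`, or it forces
`(Δ_u + Δ_v) / 20` disagreements at `u` and `v` together. -/
lemma nonagree_le (hsymm : ∀ u v, E u v ↔ E v u) (c : V → V) (u : V) :
    ((Nplus E u \ agreeing E u).card : ℝ) ≤ 21 * disag E c u +
      ∑ v ∈ Nplus E u, 20 / ((Nplus E u).card + (Nplus E v).card : ℝ) * disag E c v := by
  set B := Nplus E u \ agreeing E u with hB
  have hsplit := card_filter_add_card_filter_not (s := B) (fun v => c u = c v)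
  have hcut : (B.filter fun v => ¬ c u = c v).card ≤ disag E c u := by
    refine card_le_card fun v hv => ?_
    rw [mem_filter, hB, mem_sdiff, mem_Nplus] at hv
    have hne : v ≠ u := fun h => hv.2 (by rw [h])
    simp only [mem_filter, mem_univ, true_and]
    exact ⟨hne, Or.inl ⟨hv.1.1.resolve_left hne, hv.2⟩⟩
  have hdu : (0 : ℝ) < (Nplus E u).card := by exact_mod_cast Nplus_pos E u
  have huncut : ((B.filter fun v => c u = c v).card : ℝ) ≤ 20 * disag E c u +
      ∑ v ∈ Nplus E u, 20 / ((Nplus E u).card + (Nplus E v).card : ℝ) * disag E c v := by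
    calc ((B.filter fun v => c u = c v).card : ℝ)
        = ∑ v ∈ B.filter (fun v => c u = c v), (1 : ℝ) := by simp
      _ ≤ ∑ v ∈ B.filter (fun v => c u = c v), (20 / ((Nplus E u).card : ℝ) * disag E c u +
            20 / ((Nplus E u).card + (Nplus E v).card : ℝ) * disag E c v) := by
          refine sum_le_sum fun v hv => ?_
          rw [mem_filter, hB, mem_sdiff] at hv
          obtain ⟨⟨hN, hA⟩, hc⟩ := hv
          have h1 : (Nplus E u).card + (Nplus E v).card ≤ 20 * sdist E u v := by
            by_contra hlt
            exact hA (mem_filter.2 ⟨hN, by omega⟩)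
          have h2 := sdist_le_disag hsymm hN hc
          have h3 : ((Nplus E u).card + (Nplus E v).card : ℝ) ≤
              20 * (disag E c u + disag E c v) := by
            exact_mod_cast h1.trans (Nat.mul_le_mul_left _ h2)
          have hdv : (0 : ℝ) < (Nplus E v).card := by exact_mod_cast Nplus_pos E v
          calc (1 : ℝ) ≤ 20 * (disag E c u + disag E c v) /
                ((Nplus E u).card + (Nplus E v).card : ℝ) := by
                rw [le_div_iff₀ (by positivity)]; linarith
            _ = 20 / ((Nplus E u).card + (Nplus E v).card : ℝ) * disag E c u +
                20 / ((Nplus E u).card + (Nplus E v).card : ℝ) * disag E c v := by ring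
            _ ≤ _ := by
                gcongr
                linarith
      _ ≤ ∑ v ∈ Nplus E u, (20 / ((Nplus E u).card : ℝ) * disag E c u +
            20 / ((Nplus E u).card + (Nplus E v).card : ℝ) * disag E c v) := by
          refine sum_le_sum_of_subset_of_nonneg
            ((filter_subset _ _).trans sdiff_subset) fun v _ _ => by positivity
      _ = _ := by
          rw [sum_add_distrib, sum_const, nsmul_eq_mul]
          congr 1
          field_simp
  have h1 : (B.card : ℝ) = (B.filter fun v => c u = c v).card +
      (B.filter fun v => ¬ c u = c v).card := by exact_mod_cast hsplit.symm
  have h2 : ((B.filter fun v => ¬ c u = c v).card : ℝ) ≤ disag E c u := by exact_mod_cast hcut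
  linarith

/-- A negative edge `uv` inside a cluster `C` is either inside a cluster of `c`, a disagreement at
`u`, or it forces `|C| / 6` disagreements at `u` and `v` together. -/
lemma neg_card_le (hsymm : ∀ u v, E u v ↔ E v u) (c : V → V) (u : V) :
    ((univ.filter fun v => v ≠ u ∧ ¬ E u v ∧ clust E u = clust E v).card : ℝ) ≤
      7 * disag E c u + ∑ v ∈ clusterOf (clust E) u,
        6 / ((clusterOf (clust E) u).card : ℝ) * disag E c v := by
  set B := univ.filter fun v => v ≠ u ∧ ¬ E u v ∧ clust E u = clust E v with hB
  set C := clusterOf (clust E) u with hC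
  have hCpos : (0 : ℝ) < C.card := by
    exact_mod_cast card_pos.2 ⟨u, by simp [hC, clusterOf]⟩
  have hsplit := card_filter_add_card_filter_not (s := B) (fun v => c u = c v)
  have htog : (B.filter fun v => c u = c v).card ≤ disag E c u := by
    refine card_le_card fun v hv => ?_
    simp only [hB, mem_filter, mem_univ, true_and] at hv ⊢
    tauto
  have hsep : ((B.filter fun v => ¬ c u = c v).card : ℝ) ≤ 6 * disag E c u +
      ∑ v ∈ C, 6 / (C.card : ℝ) * disag E c v := by
    calc ((B.filter fun v => ¬ c u = c v).card : ℝ)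
        = ∑ v ∈ B.filter (fun v => ¬ c u = c v), (1 : ℝ) := by simp
      _ ≤ ∑ v ∈ B.filter (fun v => ¬ c u = c v), (6 / (C.card : ℝ) * disag E c u +
            6 / (C.card : ℝ) * disag E c v) := by
          refine sum_le_sum fun v hv => ?_
          simp only [hB, mem_filter, mem_univ, true_and] at hv
          obtain ⟨⟨hne, hE, hcl⟩, hc⟩ := hv
          have h1 := cluster_le_inter hsymm hne.symm hcl
          have h2 := inter_le_disag hsymm hne.symm hE hc
          have h3 : (C.card : ℝ) ≤ 6 * (disag E c u + disag E c v) := by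
            exact_mod_cast h1.trans (Nat.mul_le_mul_left _ h2)
          calc (1 : ℝ) ≤ 6 * (disag E c u + disag E c v) / (C.card : ℝ) := by
                rw [le_div_iff₀ hCpos]; linarith
            _ = _ := by ring
      _ ≤ ∑ v ∈ C, (6 / (C.card : ℝ) * disag E c u + 6 / (C.card : ℝ) * disag E c v) := by
          refine sum_le_sum_of_subset_of_nonneg (fun v hv => ?_) fun v _ _ => by positivity
          simp only [hB, mem_filter, mem_univ, true_and] at hv
          simp only [hC, clusterOf, mem_filter, mem_univ, true_and]
          exact hv.1.2.2.symm
      _ = _ := by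
          rw [sum_add_distrib, sum_const, nsmul_eq_mul]
          congr 1
          field_simp
  have h1 : (B.card : ℝ) = (B.filter fun v => c u = c v).card +
      (B.filter fun v => ¬ c u = c v).card := by exact_mod_cast hsplit.symm
  have h2 : ((B.filter fun v => c u = c v).card : ℝ) ≤ disag E c u := by exact_mod_cast htog
  linarith

/-! ### The charging matrix -/

/-- The number of disagreements at `u` charged to each disagreement at `v`: a diagonal part, a part
along positive edges, and a multiple of the average over the cluster of `u`. The constants are
`427 = 20 * 21 + 7`, `400 = 20 * 20` and `6`, from `pos_card_le`, `nonagree_le` and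
`neg_card_le`. -/
def chargeMatrix (E : V → V → Prop) [DecidableRel E] (u v : V) : ℝ :=
  (if u = v then 427 else 0) +
  (if v ∈ Nplus E u then 400 / ((Nplus E u).card + (Nplus E v).card : ℝ) else 0) +
  (if v ∈ clusterOf (clust E) u then 6 / ((clusterOf (clust E) u).card : ℝ) else 0)

lemma chargeMatrix_nonneg (u v : V) : 0 ≤ chargeMatrix E u v := by
  unfold chargeMatrix; positivity

lemma chargeMatrix_symm (hsymm : ∀ u v, E u v ↔ E v u) (u v : V) :
    chargeMatrix E u v = chargeMatrix E v u := by
  have h1 : v ∈ Nplus E u ↔ u ∈ Nplus E v := by simp only [mem_Nplus, hsymm u v, eq_comm]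
  have h2 : v ∈ clusterOf (clust E) u ↔ u ∈ clusterOf (clust E) v := by
    simp only [clusterOf, mem_filter, mem_univ, true_and, eq_comm]
  have h3 : v ∈ clusterOf (clust E) u → clusterOf (clust E) u = clusterOf (clust E) v := by
    simp only [clusterOf, mem_filter, mem_univ, true_and]
    intro h
    rw [h]
  unfold chargeMatrix
  congr 1
  · congr 1
    · simp only [eq_comm]
    · simp only [h1, add_comm]
  · by_cases h : v ∈ clusterOf (clust E) u
    · rw [if_pos h, if_pos (h2.1 h), h3 h]
    · rw [if_neg h, if_neg (fun h' => h (h2.2 h'))]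

lemma chargeMatrix_sum (u : V) (x : V → ℝ) : ∑ v, chargeMatrix E u v * x v =
    427 * x u +
    ∑ v ∈ Nplus E u, 400 / ((Nplus E u).card + (Nplus E v).card : ℝ) * x v +
    ∑ v ∈ clusterOf (clust E) u, 6 / ((clusterOf (clust E) u).card : ℝ) * x v := by
  simp only [chargeMatrix, add_mul, sum_add_distrib, ite_mul, zero_mul, sum_ite_eq, mem_univ,
    if_true, sum_ite_mem, univ_inter]

lemma chargeMatrix_row (u : V) : ∑ v, chargeMatrix E u v ≤ 833 := by
  have h := chargeMatrix_sum (E := E) u (fun _ => 1)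
  simp only [mul_one] at h
  rw [h]
  have hdu : (0 : ℝ) < (Nplus E u).card := by exact_mod_cast Nplus_pos E u
  have hCpos : (0 : ℝ) < (clusterOf (clust E) u).card := by
    exact_mod_cast card_pos.2 ⟨u, by simp [clusterOf]⟩
  have h1 : ∑ v ∈ Nplus E u, 400 / ((Nplus E u).card + (Nplus E v).card : ℝ) ≤ 400 := by
    calc _ ≤ ∑ v ∈ Nplus E u, 400 / ((Nplus E u).card : ℝ) := by
          refine sum_le_sum fun v _ => ?_
          gcongr
          have : (0 : ℝ) ≤ (Nplus E v).card := by positivity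
          linarith
      _ = 400 := by
          rw [sum_const, nsmul_eq_mul]; field_simp
  have h2 : ∑ v ∈ clusterOf (clust E) u, 6 / ((clusterOf (clust E) u).card : ℝ) = 6 := by
    rw [sum_const, nsmul_eq_mul]; field_simp
  linarith

lemma disag_le (hsymm : ∀ u v, E u v ↔ E v u) (c : V → V) (u : V) :
    (disag E (clust E) u : ℝ) ≤ ∑ v, chargeMatrix E u v * disag E c v := by
  rw [chargeMatrix_sum u (fun v => (disag E c v : ℝ))]
  have h0 : disag E (clust E) u ≤
      (univ.filter fun v => v ≠ u ∧ E u v ∧ clust E u ≠ clust E v).card +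
      (univ.filter fun v => v ≠ u ∧ ¬ E u v ∧ clust E u = clust E v).card := by
    refine (card_le_card fun v hv => ?_).trans (card_union_le _ _)
    simp only [mem_filter, mem_union, mem_univ, true_and] at hv ⊢
    tauto
  have h1 := h0.trans (Nat.add_le_add_right (pos_card_le u) _)
  have h1 : (disag E (clust E) u : ℝ) ≤ 20 * (Nplus E u \ agreeing E u).card +
      (univ.filter fun v => v ≠ u ∧ ¬ E u v ∧ clust E u = clust E v).card := by
    exact_mod_cast h1
  have h2 := nonagree_le hsymm c u
  have h3 := neg_card_le hsymm c u
  have h4 : ∑ v ∈ Nplus E u, 400 / ((Nplus E u).card + (Nplus E v).card : ℝ) * disag E c v =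
      20 * ∑ v ∈ Nplus E u, 20 / ((Nplus E u).card + (Nplus E v).card : ℝ) * disag E c v := by
    rw [mul_sum]
    exact sum_congr rfl fun v _ => by ring
  linarith

end geometry

/-! ### Norm bounds from a symmetric matrix -/

/-- A symmetric nonnegative matrix with row sums at most `K` has `ℓ_p`-operator norm at most `K`:
apply Jensen's inequality in each row, then use the column sums. -/
lemma lp_le_of_matrix {ι : Type*} [Fintype ι] {M : ι → ι → ℝ} {K : ℝ} (hM : ∀ u v, 0 ≤ M u v)
    (hs : ∀ u v, M u v = M v u) (hK : 0 ≤ K) (hrow : ∀ u, ∑ v, M u v ≤ K) {x y : ι → ℝ}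
    (hx : ∀ v, 0 ≤ x v) (hy : ∀ v, 0 ≤ y v) (hxy : ∀ u, y u ≤ ∑ v, M u v * x v)
    {p : ℝ} (hp : 1 ≤ p) :
    (∑ u, y u ^ p) ^ (1 / p) ≤ K * (∑ u, x u ^ p) ^ (1 / p) := by
  have hp0 : 0 < p := by linarith
  have hxp : ∀ v, 0 ≤ x v ^ p := fun v => Real.rpow_nonneg (hx v) p
  have hS : ∀ u, 0 ≤ ∑ v, M u v * x v ^ p := fun u =>
    sum_nonneg fun v _ => mul_nonneg (hM u v) (hxp v)
  have hu : ∀ u, y u ^ p ≤ K ^ (p - 1) * ∑ v, M u v * x v ^ p := by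
    intro u
    have h1 : y u ≤ K ^ (1 - p⁻¹) * (∑ v, M u v * x v ^ p) ^ p⁻¹ := by
      refine (hxy u).trans ((Real.inner_le_weight_mul_Lp_of_nonneg univ hp (M u) x
        (hM u) hx).trans ?_)
      have : 0 ≤ ∑ v, M u v := sum_nonneg fun v _ => hM u v
      have h1p : 0 ≤ 1 - p⁻¹ := sub_nonneg.2 (inv_le_one_of_one_le₀ hp)
      have := hS u
      gcongr
      exact hrow u
    calc y u ^ p ≤ (K ^ (1 - p⁻¹) * (∑ v, M u v * x v ^ p) ^ p⁻¹) ^ p := by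
          gcongr; exact hy u
      _ = K ^ (p - 1) * ∑ v, M u v * x v ^ p := by
          rw [Real.mul_rpow (by positivity) (Real.rpow_nonneg (hS u) _), ← Real.rpow_mul hK,
            ← Real.rpow_mul (hS u), inv_mul_cancel₀ hp0.ne', Real.rpow_one]
          congr 2
          field_simp
  have hsum : ∑ u, y u ^ p ≤ K ^ p * ∑ v, x v ^ p := by
    calc ∑ u, y u ^ p ≤ ∑ u, K ^ (p - 1) * ∑ v, M u v * x v ^ p := sum_le_sum fun u _ => hu u
      _ = K ^ (p - 1) * ∑ v, (∑ u, M v u) * x v ^ p := by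
          rw [← mul_sum, sum_comm]
          simp only [sum_mul]
          simp only [hs]
      _ ≤ K ^ (p - 1) * ∑ v, K * x v ^ p := by
          gcongr with v _
          · exact hxp v
          · exact hrow v
      _ = K ^ p * ∑ v, x v ^ p := by
          rw [← mul_sum, ← mul_assoc]
          congr 1
          nth_rewrite 2 [← Real.rpow_one K]
          rw [← Real.rpow_add_of_nonneg hK (by linarith) zero_le_one]
          congr 1
          ring
  have hX : 0 ≤ ∑ v, x v ^ p := sum_nonneg fun v _ => hxp v
  calc (∑ u, y u ^ p) ^ (1 / p) ≤ (K ^ p * ∑ v, x v ^ p) ^ (1 / p) := by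
        gcongr
        exact sum_nonneg fun u _ => Real.rpow_nonneg (hy u) p
    _ = K * (∑ u, x u ^ p) ^ (1 / p) := by
        rw [Real.mul_rpow (by positivity) hX, ← Real.rpow_mul hK, mul_one_div_cancel hp0.ne',
          Real.rpow_one]

/-- there is a single clustering that is simultaneously a
`6348`-approximation for every `ℓ_p`-norm, `p ∈ [1,∞)`, and for the `ℓ_∞`-norm. -/
theorem all_norms_simultaneous (E : V → V → Prop) [DecidableRel E]
    (hsymm : ∀ u v, E u v ↔ E v u) :
    ∃ c : V → V,
      (∀ p : ℝ, 1 ≤ p →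
        (∑ u, (disag E c u : ℝ) ^ p) ^ (1 / p) ≤ 6348 * OPTlp E p) ∧
      (((Finset.univ.sup (disag E c) : ℕ) : ℝ) ≤ 6348 * (OPTinf E : ℝ)) := by
  refine ⟨clust E, fun p hp => ?_, ?_⟩
  · obtain ⟨c, -, hc⟩ := exists_mem_eq_inf' (s := (univ : Finset (V → V))) ⟨id, mem_univ id⟩
      fun c : V → V => (∑ u, (disag E c u : ℝ) ^ p) ^ (1 / p)
    have hopt : OPTlp E p = (∑ u, (disag E c u : ℝ) ^ p) ^ (1 / p) := hc
    rw [hopt]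
    refine (lp_le_of_matrix chargeMatrix_nonneg (chargeMatrix_symm hsymm) (by norm_num)
      chargeMatrix_row (fun _ => Nat.cast_nonneg _) (fun _ => Nat.cast_nonneg _)
      (disag_le hsymm c) hp).trans ?_
    gcongr
    norm_num
  · obtain ⟨c, -, hc⟩ := exists_mem_eq_inf' (s := (univ : Finset (V → V))) ⟨id, mem_univ id⟩
      fun c : V → V => univ.sup (disag E c)
    have hopt : OPTinf E = univ.sup (disag E c) := hc
    rw [hopt]
    have hle : univ.sup (disag E (clust E)) ≤ 833 * univ.sup (disag E c) := by
      refine Finset.sup_le fun u _ => ?_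
      have h1 : (disag E (clust E) u : ℝ) ≤ 833 * (univ.sup (disag E c) : ℕ) := by
        calc (disag E (clust E) u : ℝ) ≤ ∑ v, chargeMatrix E u v * disag E c v :=
              disag_le hsymm c u
          _ ≤ ∑ v, chargeMatrix E u v * (univ.sup (disag E c) : ℕ) := by
              refine sum_le_sum fun v _ => mul_le_mul_of_nonneg_left ?_ (chargeMatrix_nonneg u v)
              exact_mod_cast le_sup (f := disag E c) (mem_univ v)
          _ ≤ 833 * (univ.sup (disag E c) : ℕ) := by
              rw [← sum_mul]
              exact mul_le_mul_of_nonneg_right (chargeMatrix_row u) (Nat.cast_nonneg _)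
      exact_mod_cast h1
    have hle' : ((univ.sup (disag E (clust E)) : ℕ) : ℝ) ≤
        833 * ((univ.sup (disag E c) : ℕ) : ℝ) := by exact_mod_cast hle
    have : (0 : ℝ) ≤ ((univ.sup (disag E c) : ℕ) : ℝ) := Nat.cast_nonneg _
    linarith
end
end

section
/- Let Δ be the maximum positive degree, i.e., Δ = max_{u∈V} Δ_u. Then for every clustering 𝒞 of V, the number of edges that are disagreements with respect to 𝒞 is at least |𝒯| / (2Δ). -/
/-!
The bound is a double count. Every bad triangle contains a disagreement
(`badTriangles_subset`). Conversely, an edge `{x, y}` lies in at most `2Δ` bad triangles: the third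
vertex of such a triangle is joined positively to `x` or to `y`, so it belongs to `N_x^+ ∪ N_y^+`
(`card_trianglesThrough_le`). Hence `|𝒯|` is at most `2Δ` times the number of disagreements.
-/

open Finset

noncomputable section

variable {V : Type*} [Fintype V] [DecidableEq V]

/-- The vertex sets `e ∪ {w}`, where `w` is a positive neighbor of an endpoint of `e`. Every bad
triangle containing the edge `e` has this form, since at least one of its two other edges is
positive. -/
def trianglesThrough (E : V → V → Prop) [DecidableRel E] (e : Sym2 V) : Finset (Finset V) :=
  (e.toFinset.biUnion (Nplus E)).image fun w => insert w e.toFinset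

lemma card_trianglesThrough_le (E : V → V → Prop) [DecidableRel E] (e : Sym2 V) :
    (trianglesThrough E e).card ≤ 2 * Finset.univ.sup fun u : V => (Nplus E u).card := by
  refine Finset.card_image_le.trans ?_
  refine (Finset.card_biUnion_le_card_mul _ _ _ fun u _ =>
    Finset.le_sup (f := fun u : V => (Nplus E u).card) (Finset.mem_univ u)).trans ?_
  refine Nat.mul_le_mul_right _ ?_
  induction e with
  | _ x y => simpa [Sym2.toFinset_mk_eq] using Finset.card_le_two (a := x) (b := y)

lemma mem_trianglesThrough (E : V → V → Prop) [DecidableRel E] {x y w : V} (hne : w ≠ x)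
    (h : E x w) : ({w, x, y} : Finset V) ∈ trianglesThrough E s(x, y) := by
  refine Finset.mem_image.2 ⟨w, Finset.mem_biUnion.2 ⟨x, ?_, ?_⟩, ?_⟩
  · simp [Sym2.toFinset_mk_eq]
  · simp [Nplus, hne, h]
  · simp [Sym2.toFinset_mk_eq]

/-- Every bad triangle contains a disagreement: if both positive edges are respected by `c`, its
three vertices lie in one cluster, and then the negative edge is a disagreement. -/
lemma badTriangles_subset (E : V → V → Prop) [DecidableRel E]
    (hsymm : ∀ u v, E u v ↔ E v u) (c : V → V) :
    badTriangles E ⊆ (Finset.univ.filter fun e : Sym2 V => ∃ u v : V, e = s(u, v) ∧ u ≠ v ∧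
        ((E u v ∧ c u ≠ c v) ∨ (¬ E u v ∧ c u = c v))).biUnion (trianglesThrough E) := by
  intro T hT
  obtain ⟨u, v, w, huv, huw, hvw, rfl, h1, h2, h3⟩ := (Finset.mem_filter.1 hT).2
  rw [Finset.mem_biUnion]
  by_cases hc : c u = c v
  · by_cases hc' : c u = c w
    · exact ⟨s(v, w), Finset.mem_filter.2 ⟨Finset.mem_univ _, v, w, rfl, hvw,
        Or.inr ⟨h3, hc.symm.trans hc'⟩⟩, mem_trianglesThrough E huv ((hsymm u v).1 h1)⟩
    · refine ⟨s(u, w), Finset.mem_filter.2 ⟨Finset.mem_univ _, u, w, rfl, huw,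
        Or.inl ⟨h2, hc'⟩⟩, ?_⟩
      rw [Finset.insert_comm u v]
      exact mem_trianglesThrough E huv.symm h1
  · refine ⟨s(u, v), Finset.mem_filter.2 ⟨Finset.mem_univ _, u, v, rfl, huv,
        Or.inl ⟨h1, hc⟩⟩, ?_⟩
    rw [Finset.pair_comm v w, Finset.insert_comm u w]
    exact mem_trianglesThrough E huw.symm h2

/-- every clustering has at least `|𝒯| / (2Δ)` disagreeing edges, where
`Δ` is the maximum positive degree. -/
theorem disagreement_edges_lower_bound (E : V → V → Prop) [DecidableRel E]
    (hsymm : ∀ u v, E u v ↔ E v u) (c : V → V) :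
    ((badTriangles E).card : ℝ) /
        (2 * ((Finset.univ.sup fun u : V => (Nplus E u).card : ℕ) : ℝ)) ≤
      ((Finset.univ.filter fun e : Sym2 V => ∃ u v : V, e = s(u, v) ∧ u ≠ v ∧
        ((E u v ∧ c u ≠ c v) ∨ (¬ E u v ∧ c u = c v))).card : ℝ) := by
  have h := (Finset.card_le_card (badTriangles_subset E hsymm c)).trans
    (Finset.card_biUnion_le_card_mul _ _ _ fun e _ => card_trianglesThrough_le E e)
  -- `div_le_of_le_mul₀` also covers `Δ = 0` (empty `V`), where the quotient is `0` by convention.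
  refine div_le_of_le_mul₀ (by positivity) (by positivity) ?_
  exact_mod_cast h
end
end

section
/- Suppose the subgraph of positive edges is Δ-regular, i.e., |N_u^+| = Δ for all u ∈ V. Then the total fractional cost of the correlation metric d over the (unordered) edges satisfies Σ_{(u,v)∈E⁻} (1 − d_uv) + Σ_{(u,v)∈E⁺} d_uv ≤ 3 · |𝒯| / Δ. -/
/-!
By regularity `|N_u⁺ ∪ N_v⁺| ≥ Δ`, so it is enough to bound the numerators of the edge costs.
For a negative edge `uv` the numerator of `1 - d_uv` is `|N_u⁺ ∩ N_v⁺|`, the number of bad triangles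
having `uv` as their negative edge. For a positive edge `uv` the numerator of `d_uv` is
`|N_u⁺ \ N_v⁺| + |N_v⁺ \ N_u⁺|`, the number of bad triangles having `uv` as a positive edge.
Each bad triangle is therefore counted three times, once for each of its edges.

The count is carried out over ordered triples `(u, v, w)` with centre `u` (`IsCherry`): a bad
triangle gives two of these (`sum_isCherry_le`), and the sums over ordered pairs are at most the
number `S` of cherries for negative edges (`one_sub_corrDist_le`) and `2 S` for positive edges
(`corrDist_le`), all divided by `Δ`.
-/

open Finset

noncomputable section

variable {V : Type*} [Fintype V] [DecidableEq V]

/-- The ordered triple `(u, v, w)` spans a bad triangle whose two positive edges meet at `u`. -/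
def IsCherry (E : V → V → Prop) (u v w : V) : Prop :=
  u ≠ v ∧ u ≠ w ∧ v ≠ w ∧ E u v ∧ E u w ∧ ¬ E v w

instance (E : V → V → Prop) [DecidableRel E] (u v w : V) : Decidable (IsCherry E u v w) := by
  unfold IsCherry; infer_instance

/-- The centre of a bad triangle is determined, so each bad triangle arises from at most two
cherries. -/
lemma sum_isCherry_le (E : V → V → Prop) [DecidableRel E] (hsymm : ∀ u v, E u v ↔ E v u) :
    (∑ u, ∑ v, ∑ w, if IsCherry E u v w then (1 : ℝ) else 0) ≤
      2 * ((badTriangles E).card : ℝ) := by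
  set P : Finset (V × V × V) := univ.filter fun t => IsCherry E t.1 t.2.1 t.2.2 with hP
  have hsum : (∑ u, ∑ v, ∑ w, if IsCherry E u v w then (1 : ℝ) else 0) = (P.card : ℝ) := by
    rw [hP, ← Finset.sum_boole, Fintype.sum_prod_type]
    simp only [Fintype.sum_prod_type]
  rw [hsum]
  have hle : P.card ≤ 2 * (badTriangles E).card := by
    refine Finset.card_le_mul_card_image_of_maps_to
      (f := fun t : V × V × V => ({t.1, t.2.1, t.2.2} : Finset V)) ?_ 2 ?_
    · rintro ⟨u, v, w⟩ h
      simp only [hP, mem_filter, mem_univ, true_and] at h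
      obtain ⟨h1, h2, h3, h4, h5, h6⟩ := h
      simp only [badTriangles, mem_filter, mem_univ, true_and]
      exact ⟨u, v, w, h1, h2, h3, rfl, h4, h5, h6⟩
    · intro T hT
      simp only [badTriangles, mem_filter, mem_univ, true_and] at hT
      obtain ⟨a, b, c, hab, hac, hbc, rfl, eab, eac, ebc⟩ := hT
      refine (Finset.card_le_card (t := {(a, b, c), (a, c, b)}) ?_).trans Finset.card_le_two
      rintro ⟨u, v, w⟩ h
      simp only [hP, mem_filter, mem_univ, true_and] at h
      obtain ⟨⟨h1, h2, h3, h4, h5, h6⟩, hT⟩ := h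
      have hu : u ∈ ({a, b, c} : Finset V) := by rw [← hT]; simp
      have hv : v ∈ ({a, b, c} : Finset V) := by rw [← hT]; simp
      have hw : w ∈ ({a, b, c} : Finset V) := by rw [← hT]; simp
      simp only [mem_insert, mem_singleton] at hu hv hw
      have ebc' : ¬ E c b := fun h => ebc ((hsymm _ _).1 h)
      simp only [mem_insert, mem_singleton, Prod.mk.injEq]
      rcases hu with rfl | rfl | rfl <;> rcases hv with rfl | rfl | rfl <;>
        rcases hw with rfl | rfl | rfl <;> simp_all
  exact_mod_cast hle

lemma card_le_sum_boole (s : Finset V) (p : V → Prop) [DecidablePred p] (h : ∀ w ∈ s, p w) :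
    (s.card : ℝ) ≤ ∑ w, if p w then (1 : ℝ) else 0 := by
  rw [Finset.sum_boole]
  exact_mod_cast Finset.card_le_card fun w hw => by simpa using h w hw

/-- A common positive neighbour of the ends of a negative edge is the centre of a cherry. -/
lemma one_sub_corrDist_le (E : V → V → Prop) [DecidableRel E] (hsymm : ∀ u v, E u v ↔ E v u)
    (Δ : ℕ) (hΔ : 0 < Δ) (hreg : ∀ u : V, (Nplus E u).card = Δ) (u v : V)
    (hv : v ∈ Nminus E u) :
    1 - corrDist E u v ≤ (∑ w, if IsCherry E w u v then (1 : ℝ) else 0) / Δ := by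
  simp only [Nminus, mem_filter, mem_univ, true_and] at hv
  have hU : (Δ : ℝ) ≤ ((Nplus E u ∪ Nplus E v).card : ℝ) := by
    exact_mod_cast (hreg u) ▸ Finset.card_le_card Finset.subset_union_left
  have hΔ' : (0 : ℝ) < Δ := by exact_mod_cast hΔ
  rw [corrDist, if_neg (Ne.symm hv.1), sub_sub_cancel]
  refine div_le_div₀ (by positivity) (card_le_sum_boole _ _ fun w hw => ?_) hΔ' hU
  simp only [Nplus, mem_inter, mem_insert, mem_filter, mem_univ, true_and] at hw
  have := hsymm u v; have := hsymm u w; have := hsymm v w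
  unfold IsCherry
  grind

/-- A positive neighbour of exactly one end of a positive edge completes it to a cherry centred
at that end. -/
lemma corrDist_le (E : V → V → Prop) [DecidableRel E] (hsymm : ∀ u v, E u v ↔ E v u)
    (Δ : ℕ) (hΔ : 0 < Δ) (hreg : ∀ u : V, (Nplus E u).card = Δ) (u v : V)
    (hv : v ∈ Nplus E u) :
    corrDist E u v ≤ ((∑ w, if IsCherry E u v w then (1 : ℝ) else 0) +
      ∑ w, if IsCherry E v u w then (1 : ℝ) else 0) / Δ := by
  have hΔ' : (0 : ℝ) < Δ := by exact_mod_cast hΔ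
  by_cases huv : u = v
  · rw [corrDist, if_pos huv]
    positivity
  have hE : E u v := by
    simp only [Nplus, mem_insert, mem_filter, mem_univ, true_and] at hv
    grind
  have hE' : E v u := (hsymm _ _).1 hE
  have hU : (Δ : ℝ) ≤ ((Nplus E u ∪ Nplus E v).card : ℝ) := by
    exact_mod_cast (hreg u) ▸ Finset.card_le_card Finset.subset_union_left
  have hU0 : ((Nplus E u ∪ Nplus E v).card : ℝ) ≠ 0 := (hΔ'.trans_le hU).ne'
  have h1 := Finset.card_union_add_card_inter (Nplus E u) (Nplus E v)
  have h2 := Finset.card_sdiff_add_card_inter (Nplus E u) (Nplus E v)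
  have h3 := Finset.card_sdiff_add_card_inter (Nplus E v) (Nplus E u)
  rw [Finset.inter_comm (Nplus E v)] at h3
  have hcard : ((Nplus E u ∪ Nplus E v).card : ℝ) - ((Nplus E u ∩ Nplus E v).card : ℝ) =
      ((Nplus E u \ Nplus E v).card : ℝ) + ((Nplus E v \ Nplus E u).card : ℝ) := by
    rw [sub_eq_iff_eq_add]
    exact_mod_cast (by omega)
  rw [corrDist, if_neg huv, one_sub_div hU0, hcard]
  refine div_le_div₀ (by positivity) (add_le_add (card_le_sum_boole _ _ fun w hw => ?_)
    (card_le_sum_boole _ _ fun w hw => ?_)) hΔ' hU <;>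
  · simp only [Nplus, mem_sdiff, mem_insert, mem_filter, mem_univ, true_and] at hw
    unfold IsCherry
    grind

/-- if the positive subgraph is `Δ`-regular, the total fractional cost of
the correlation metric over the unordered edges is at most `3·|𝒯|/Δ`. -/
theorem regular_frac_cost_vs_triangles (E : V → V → Prop) [DecidableRel E]
    (hsymm : ∀ u v, E u v ↔ E v u) (Δ : ℕ) (hreg : ∀ u : V, (Nplus E u).card = Δ) :
    (∑ u, ∑ v ∈ Nminus E u, (1 - corrDist E u v)) / 2 +
      (∑ u, ∑ v ∈ Nplus E u, corrDist E u v) / 2 ≤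
      3 * ((badTriangles E).card : ℝ) / (Δ : ℝ) := by
  rcases isEmpty_or_nonempty V with hV | ⟨⟨x⟩⟩
  · simp only [Finset.univ_eq_empty, Finset.sum_empty, zero_div, add_zero]
    positivity
  have hΔ : 0 < Δ := by
    rw [← hreg x]
    exact Finset.card_pos.2 ⟨x, by simp [Nplus]⟩
  have hΔ' : (0 : ℝ) < Δ := by exact_mod_cast hΔ
  set S : ℝ := ∑ u, ∑ v, ∑ w, if IsCherry E u v w then (1 : ℝ) else 0 with hS
  have hST : S ≤ 2 * ((badTriangles E).card : ℝ) := sum_isCherry_le E hsymm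
  have hneg : ∑ u, ∑ v ∈ Nminus E u, (1 - corrDist E u v) ≤ S / Δ := by
    calc ∑ u, ∑ v ∈ Nminus E u, (1 - corrDist E u v)
        ≤ ∑ u, ∑ v, (∑ w, if IsCherry E w u v then (1 : ℝ) else 0) / Δ :=
          Finset.sum_le_sum fun u _ => (Finset.sum_le_sum fun v hv =>
            one_sub_corrDist_le E hsymm Δ hΔ hreg u v hv).trans
            (Finset.sum_le_univ_sum_of_nonneg fun v => by positivity)
      _ = S / Δ := by
          simp only [← Finset.sum_div]
          congr 1
          -- move the summation over the centre `w` to the outside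
          rw [hS, Finset.sum_comm (s := univ) (t := univ)
            (f := fun w u => ∑ v, if IsCherry E w u v then (1 : ℝ) else 0)]
          exact Finset.sum_congr rfl fun u _ => Finset.sum_comm
  have hpos : ∑ u, ∑ v ∈ Nplus E u, corrDist E u v ≤ (S + S) / Δ := by
    calc ∑ u, ∑ v ∈ Nplus E u, corrDist E u v
        ≤ ∑ u, ∑ v, ((∑ w, if IsCherry E u v w then (1 : ℝ) else 0) +
            ∑ w, if IsCherry E v u w then (1 : ℝ) else 0) / Δ :=
          Finset.sum_le_sum fun u _ => (Finset.sum_le_sum fun v hv =>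
            corrDist_le E hsymm Δ hΔ hreg u v hv).trans
            (Finset.sum_le_univ_sum_of_nonneg fun v => by positivity)
      _ = (S + S) / Δ := by
          simp only [← Finset.sum_div, Finset.sum_add_distrib]
          congr 2
          exact Finset.sum_comm
  calc _ ≤ S / Δ / 2 + (S + S) / Δ / 2 := by gcongr
    _ = 3 * (S / 2) / Δ := by ring
    _ ≤ _ := by gcongr; linarith
end
end

section
/- If u,v ∈ V satisfy d_uv ≤ 1/4, then |N_u^+| ≤ (7/3) · |N_v^+|. -/
open Finset

noncomputable section

variable {V : Type*} [Fintype V] [DecidableEq V]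

/-- if `d_uv ≤ 1/4`, then `|N_u^+| ≤ (7/3)·|N_v^+|`. -/
theorem similar_nbhds (E : V → V → Prop) [DecidableRel E]
    (hsymm : ∀ u v, E u v ↔ E v u) (u v : V) (hd : corrDist E u v ≤ 1 / 4) :
    ((Nplus E u).card : ℝ) ≤ (7 / 3) * ((Nplus E v).card : ℝ) := by
  by_cases huv : u = v
  · subst huv
    have : (0 : ℝ) ≤ (Nplus E u).card := Nat.cast_nonneg _
    linarith
  · rw [corrDist, if_neg huv] at hd
    have hpos : (0 : ℝ) < ((Nplus E u ∪ Nplus E v).card : ℝ) := by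
      have : u ∈ Nplus E u ∪ Nplus E v := by simp [Nplus]
      exact_mod_cast Finset.card_pos.mpr ⟨u, this⟩
    have hratio : (3 / 4 : ℝ) ≤
        ((Nplus E u ∩ Nplus E v).card : ℝ) / ((Nplus E u ∪ Nplus E v).card : ℝ) := by
      linarith
    rw [le_div_iff₀ hpos] at hratio
    have hinter : ((Nplus E u ∩ Nplus E v).card : ℝ) ≤ (Nplus E v).card := by
      exact_mod_cast Finset.card_le_card Finset.inter_subset_right
    have hunion : ((Nplus E u).card : ℝ) ≤ (Nplus E u ∪ Nplus E v).card := by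
      exact_mod_cast Finset.card_le_card Finset.subset_union_left
    -- The chain `3/4 * |N_u| ≤ 3/4 * |N_u ∪ N_v| ≤ |N_u ∩ N_v| ≤ |N_v|`
    -- gives the factor `4/3`, better than `7/3`.
    linarith
end
end

section
/- The adjusted correlation metric f is a (10/7)-semi-metric: f is symmetric, nonnegative, f_uu = 0 for all u, and for all u,v,w ∈ V, f_uv ≤ (10/7) · (f_uw + f_vw). -/
/-!
The correlation metric is the Jaccard distance between positive neighborhoods, which satisfies the
triangle inequality (`jaccard_triangle`): enlarging every union to the union `N` of all three sets
reduces it to the counting inequality `card_triangle`.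

The adjusted metric satisfies `d ≤ f ≤ 1`, and it equals `1` whenever one of two distinct
endpoints lies in `R₁`. Outside `R₁` rounding only happens when `d > 7/10`, so there
`f ≤ (10/7) d`. If `u`, `v`, `w` are distinct and one of them lies in `R₁`, then `f u w` or `f v w`
is `1` and the right-hand side is at least `10/7`; otherwise
`f u v ≤ (10/7) d u v ≤ (10/7) (d u w + d v w) ≤ (10/7) (f u w + f v w)`.
-/

open Finset

noncomputable section

variable {V : Type*} [Fintype V] [DecidableEq V]

/-- The inclusion-exclusion content of the Jaccard triangle inequality. -/
lemma card_triangle {α : Type*} [DecidableEq α] (A B C : Finset α) :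
    (A ∪ B ∪ C).card + (A ∩ B).card + (C ∩ B).card
      ≤ (A ∪ B).card + (C ∪ B).card + (A ∩ C).card := by
  have h1 : (A ∩ B).card + (C ∩ B).card = ((A ∪ C) ∩ B).card + ((A ∩ C) ∩ B).card := by
    rw [← card_union_add_card_inter (A ∩ B) (C ∩ B), ← union_inter_distrib_right,
      ← inter_inter_distrib_right]
  have h2 : (A ∪ B ∪ C).card + ((A ∪ C) ∩ B).card = (A ∪ C).card + B.card := by
    rw [union_right_comm, card_union_add_card_inter]
  have h3 : (A ∪ B).card + (C ∪ B).card
      = (A ∪ B ∪ C).card + ((A ∩ C) ∪ B).card := by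
    rw [← card_union_add_card_inter (A ∪ B) (C ∪ B), ← union_union_distrib_right,
      ← inter_union_distrib_right, union_right_comm A C B]
  have h4 := card_union_add_card_inter (A ∩ C) B
  have h5 : B.card ≤ ((A ∩ C) ∪ B).card := card_le_card subset_union_right
  have h6 : (A ∪ C).card ≤ (A ∪ B ∪ C).card := card_le_card (by grind)
  omega

/-- The triangle inequality for the Jaccard distance. -/
lemma jaccard_triangle {α : Type*} [DecidableEq α] (A B C : Finset α)
    (hA : A.Nonempty) (hC : C.Nonempty) :
    1 - ((A ∩ C).card : ℝ) / (A ∪ C).card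
      ≤ (1 - ((A ∩ B).card : ℝ) / (A ∪ B).card) + (1 - ((C ∩ B).card : ℝ) / (C ∪ B).card) := by
  set N : ℝ := ((A ∪ B ∪ C).card : ℝ) with hN
  have pos : ∀ {X Y : Finset α}, X.Nonempty → (0 : ℝ) < ((X ∪ Y).card : ℝ) := fun h => by
    exact_mod_cast card_pos.2 (h.mono subset_union_left)
  have hNpos : 0 < N := by rw [hN, union_assoc]; exact pos hA
  -- Adding the same nonnegative amount to both counts can only increase a fraction at most `1`.
  have key : ∀ X Y : Finset α, X.Nonempty → X ∪ Y ⊆ A ∪ B ∪ C →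
      ((X ∩ Y).card : ℝ) / (X ∪ Y).card ≤ ((X ∩ Y).card + N - (X ∪ Y).card) / N := by
    intro X Y hX hs
    have h1 : ((X ∪ Y).card : ℝ) ≤ N := by rw [hN]; exact_mod_cast card_le_card hs
    have h2 : ((X ∩ Y).card : ℝ) ≤ (X ∪ Y).card := by
      exact_mod_cast card_le_card (inter_subset_left.trans subset_union_left)
    rw [div_le_div_iff₀ (pos hX) hNpos]
    nlinarith [mul_nonneg (sub_nonneg.2 h1) (sub_nonneg.2 h2)]
  have hAB := key A B hA (by grind)
  have hCB := key C B hC (by grind)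
  have hAC : ((A ∩ C).card : ℝ) / N ≤ ((A ∩ C).card : ℝ) / (A ∪ C).card := by
    have h : ((A ∪ C).card : ℝ) ≤ N := by
      rw [hN]
      exact_mod_cast card_le_card (show A ∪ C ⊆ A ∪ B ∪ C by grind)
    exact div_le_div_of_nonneg_left (Nat.cast_nonneg _) (pos hA) h
  have hcard : N + (A ∩ B).card + (C ∩ B).card
      ≤ (A ∪ B).card + (C ∪ B).card + (A ∩ C).card := by
    rw [hN]
    exact_mod_cast card_triangle A B C
  have hsum : ((A ∩ B).card + N - (A ∪ B).card) / N + ((C ∩ B).card + N - (C ∪ B).card) / N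
      ≤ 1 + ((A ∩ C).card : ℝ) / N := by
    rw [← add_div, one_add_div hNpos.ne']
    exact div_le_div_of_nonneg_right (by linarith) hNpos.le
  linarith

section

variable (E : V → V → Prop) [DecidableRel E]

lemma Nplus_nonempty (u : V) : (Nplus E u).Nonempty := ⟨u, mem_insert_self _ _⟩

lemma corrDist_comm (u v : V) : corrDist E u v = corrDist E v u := by
  simp only [corrDist, eq_comm (a := u), inter_comm (Nplus E u), union_comm (Nplus E u)]

lemma corrDist_nonneg (u v : V) : 0 ≤ corrDist E u v := by
  unfold corrDist
  split_ifs
  · exact le_rfl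
  · refine sub_nonneg.2 (div_le_one_of_le₀ ?_ (Nat.cast_nonneg _))
    exact_mod_cast card_le_card (inter_subset_left.trans subset_union_left)

lemma corrDist_le_one (u v : V) : corrDist E u v ≤ 1 := by
  unfold corrDist
  split_ifs
  · exact zero_le_one
  · exact sub_le_self _ (by positivity)

lemma corrDist_triangle {u v w : V} (huv : u ≠ v) (huw : u ≠ w) (hvw : v ≠ w) :
    corrDist E u v ≤ corrDist E u w + corrDist E v w := by
  simp only [corrDist, if_neg huv, if_neg huw, if_neg hvw]
  exact jaccard_triangle _ _ _ (Nplus_nonempty E u) (Nplus_nonempty E v)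

lemma corrDist_le_adjDist (u v : V) : corrDist E u v ≤ adjDist E u v := by
  have := corrDist_le_one E u v
  unfold adjDist
  split_ifs with h
  · simp [corrDist, h]
  all_goals linarith

lemma adjDist_le_one (u v : V) : adjDist E u v ≤ 1 := by
  have := corrDist_le_one E u v
  unfold adjDist
  split_ifs <;> linarith

lemma adjDist_nonneg (u v : V) : 0 ≤ adjDist E u v :=
  (corrDist_nonneg E u v).trans (corrDist_le_adjDist E u v)

lemma adjDist_comm (hsymm : ∀ u v, E u v ↔ E v u) (u v : V) :
    adjDist E u v = adjDist E v u := by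
  simp only [adjDist, eq_comm (a := u), or_comm (a := u ∈ R1set E), hsymm u v, corrDist_comm E u v]

lemma adjDist_eq_one_of_mem {u v : V} (huv : u ≠ v) (h : u ∈ R1set E ∨ v ∈ R1set E) :
    adjDist E u v = 1 := by
  simp [adjDist, huv, h]

/-- Away from `R₁`, the adjustment increases distances by a factor of at most `10/7`, because only
distances exceeding `7/10` are rounded up. -/
lemma adjDist_le_of_notMem {u v : V} (hu : u ∉ R1set E) (hv : v ∉ R1set E) :
    adjDist E u v ≤ (10 / 7) * corrDist E u v := by
  have := corrDist_nonneg E u v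
  unfold adjDist
  split_ifs with h1 h2 h3
  · linarith
  · exact absurd h2 (by simp [hu, hv])
  · have := h3.2
    norm_num at this
    linarith
  · linarith

end

/-- the adjusted correlation metric `f` is a `(10/7)`-semi-metric. -/
theorem adjusted_metric_is_semi_metric (E : V → V → Prop) [DecidableRel E]
    (hsymm : ∀ u v, E u v ↔ E v u) :
    (∀ u v : V, adjDist E u v = adjDist E v u) ∧
    (∀ u v : V, 0 ≤ adjDist E u v) ∧
    (∀ u : V, adjDist E u u = 0) ∧
    (∀ u v w : V, adjDist E u v ≤ (10 / 7) * (adjDist E u w + adjDist E v w)) := by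
  refine ⟨adjDist_comm E hsymm, adjDist_nonneg E, fun u => by simp [adjDist], fun u v w => ?_⟩
  have huw0 := adjDist_nonneg E u w
  have hvw0 := adjDist_nonneg E v w
  have huv0 := adjDist_nonneg E u v
  rcases eq_or_ne u v with rfl | huv
  · have : adjDist E u u = 0 := by simp [adjDist]
    linarith
  rcases eq_or_ne u w with rfl | huw
  · have := adjDist_comm E hsymm u v
    linarith
  rcases eq_or_ne v w with rfl | hvw
  · linarith
  have hle := adjDist_le_one E u v
  by_cases hw : w ∈ R1set E
  · have := adjDist_eq_one_of_mem E huw (Or.inr hw)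
    linarith
  by_cases hu : u ∈ R1set E
  · have := adjDist_eq_one_of_mem E huw (Or.inl hu)
    linarith
  by_cases hv : v ∈ R1set E
  · have := adjDist_eq_one_of_mem E hvw (Or.inl hv)
    linarith
  have h1 := adjDist_le_of_notMem E hu hv
  have h2 := corrDist_triangle E huv huw hvw
  have h3 := corrDist_le_adjDist E u w
  have h4 := corrDist_le_adjDist E v w
  linarith
end
end

section
/- For every p ∈ [1,∞), Σ_{u∈R₁} |N_u^+|^p ≤ ( (20/3)^p + 2 + 2·4^p ) · OPT(p)^p. -/
/-!
Fix an optimal clustering `c` with disagreement vector `y`, and write `Δ u` for the size of the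
positive neighborhood of `u`. Vertices `u ∈ R₁` with `y u ≥ (3/20) Δ u` are charged to themselves,
at cost `(20/3)^p`.

Any other `u ∈ R₁` is called light: its cluster `C` nearly coincides with its positive neighborhood, so
`|C| ≤ 1.15 Δ u`, and more than `3 Δ u` of the at least `(10/3) Δ u` negative neighbors `v` with
`d u v ≤ 0.7` lie outside `C`. Each such `v` shares at least `0.3 Δ u` positive neighbors with `u`,
at least `0.15 Δ u` of them in `C`, and each of these gives a positive edge leaving `C`. Double
counting yields `∑ w ∈ C, y w ≥ Δ u * |C| / 4` (`light_cluster_sum`). By the power mean inequality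
`|C| * (Δ u)^p ≤ 4^p * ∑ w ∈ C, (y w)^p` (`light_cluster_rpow`); applied to the light `u ∈ C` of
largest `Δ u`, this bounds the contribution of all light vertices in `C`. Summing over clusters
gives the bound with the constant `(20/3)^p + 4^p`, which is smaller than required.
-/

open Finset

noncomputable section

variable {V : Type*} [Fintype V] [DecidableEq V]

/-- If `v` is within distance `0.7` of `u`, it shares at least `3/10` of the positive neighborhood
of `u`. -/
lemma card_inter_of_corrDist_le (E : V → V → Prop) [DecidableRel E] {u v : V}
    (h : corrDist E u v ≤ 0.7) :
    (3 / 10 : ℝ) * (Nplus E u).card ≤ ((Nplus E u ∩ Nplus E v).card : ℝ) := by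
  by_cases huv : u = v
  · subst huv
    rw [inter_self]
    have : (0 : ℝ) ≤ (Nplus E u).card := by positivity
    linarith
  · unfold corrDist at h
    rw [if_neg huv] at h
    have hle : ((Nplus E u).card : ℝ) ≤ (Nplus E u ∪ Nplus E v).card := by
      exact_mod_cast card_le_card subset_union_left
    have hpos : (0 : ℝ) < (Nplus E u ∪ Nplus E v).card := by
      exact_mod_cast card_pos.mpr ⟨u, by simp [Nplus]⟩
    have h' : (3 / 10 : ℝ) ≤
        ((Nplus E u ∩ Nplus E v).card : ℝ) / ((Nplus E u ∪ Nplus E v).card : ℝ) := by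
      norm_num at h ⊢
      linarith
    rw [le_div_iff₀ hpos] at h'
    linarith

lemma card_Nplus_sdiff_le_disag (E : V → V → Prop) [DecidableRel E] (c : V → V) (u : V) :
    (Nplus E u \ clusterOf c u).card ≤ disag E c u := by
  apply card_le_card
  intro w hw
  simp only [Nplus, clusterOf, mem_sdiff, mem_insert, mem_filter, mem_univ, true_and] at hw ⊢
  obtain ⟨h1, h2⟩ := hw
  rcases h1 with rfl | h1
  · exact absurd rfl h2
  · exact ⟨h1.1, Or.inl ⟨h1.2, fun h => h2 h.symm⟩⟩

lemma card_Nminus_inter_le_disag (E : V → V → Prop) [DecidableRel E] (c : V → V) (u : V) :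
    (Nminus E u ∩ clusterOf c u).card ≤ disag E c u := by
  apply card_le_card
  intro w hw
  simp only [Nminus, clusterOf, mem_inter, mem_filter, mem_univ, true_and] at hw ⊢
  exact ⟨hw.1.1, Or.inr ⟨hw.1.2, hw.2.symm⟩⟩

lemma card_clusterOf_le (E : V → V → Prop) [DecidableRel E] (c : V → V) (u : V) :
    (clusterOf c u).card ≤ (Nplus E u).card + disag E c u := by
  have hsub : clusterOf c u ⊆ Nplus E u ∪ (Nminus E u ∩ clusterOf c u) := by
    intro w hw
    by_cases h1 : w = u <;> by_cases h2 : E u w <;> simp [Nplus, Nminus, h1, h2, hw]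
  calc _ ≤ _ := card_le_card hsub
    _ ≤ _ := card_union_le _ _
    _ ≤ _ := Nat.add_le_add_left (card_Nminus_inter_le_disag E c u) _

/-- Every positive edge from the cluster of `u` to a set `T` outside it is a disagreement, counted
here from its endpoint in `T`. -/
lemma sum_card_le_sum_disag (E : V → V → Prop) [DecidableRel E]
    (hsymm : ∀ u v, E u v ↔ E v u) (c : V → V) (u : V) (T : Finset V)
    (hT : ∀ v ∈ T, c v ≠ c u) :
    ∑ v ∈ T, (Nplus E v ∩ clusterOf c u).card ≤ ∑ w ∈ clusterOf c u, disag E c w := by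
  have key := sum_card_bipartiteAbove_eq_sum_card_bipartiteBelow
    (s := clusterOf c u) (t := T) (fun w v => E w v)
  calc ∑ v ∈ T, (Nplus E v ∩ clusterOf c u).card
      ≤ ∑ v ∈ T, (bipartiteBelow (fun w v => E w v) (clusterOf c u) v).card := by
        apply sum_le_sum
        intro v hv
        apply card_le_card
        intro w hw
        have hvT := hT v hv
        simp only [Nplus, clusterOf, bipartiteBelow, mem_inter, mem_insert, mem_filter, mem_univ,
          true_and] at hw ⊢
        obtain ⟨h1, h2⟩ := hw
        rcases h1 with rfl | h1
        · exact absurd h2 hvT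
        · exact ⟨h2, (hsymm _ _).1 h1.2⟩
    _ = ∑ w ∈ clusterOf c u, (bipartiteAbove (fun w v => E w v) T w).card := key.symm
    _ ≤ _ := by
        apply sum_le_sum
        intro w hw
        apply card_le_card
        intro v hv
        simp only [clusterOf, bipartiteAbove, mem_filter, mem_univ, true_and] at hw hv ⊢
        have hne : c v ≠ c w := by rw [hw]; exact hT v hv.1
        exact ⟨fun h => hne (by rw [h]), Or.inl ⟨hv.2, hne.symm⟩⟩

/-- The cluster of a light vertex `u` of `R₁` has average disagreement at least `Δ u / 4`. -/
lemma light_cluster_sum (E : V → V → Prop) [DecidableRel E]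
    (hsymm : ∀ u v, E u v ↔ E v u) (c : V → V) (u : V) (hu : u ∈ R1set E)
    (hl : (disag E c u : ℝ) < 3 / 20 * (Nplus E u).card) :
    ((Nplus E u).card : ℝ) * (clusterOf c u).card / 4 ≤
      ∑ w ∈ clusterOf c u, (disag E c w : ℝ) := by
  set N := (Nminus E u).filter fun v => corrDist E u v ≤ 0.7 with hN
  set C := clusterOf c u with hC
  have hR : (10 / 3 : ℝ) * (Nplus E u).card ≤ N.card := (mem_filter.mp hu).2
  have hT : ∀ v ∈ N \ C, c v ≠ c u := by
    intro v hv h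
    exact (mem_sdiff.mp hv).2 (by simp [hC, clusterOf, h])
  have hcount : (∑ v ∈ N \ C, ((Nplus E v ∩ C).card : ℝ)) ≤ ∑ w ∈ C, (disag E c w : ℝ) := by
    exact_mod_cast sum_card_le_sum_disag E hsymm c u (N \ C) hT
  have h1 : ((Nplus E u \ C).card : ℝ) ≤ disag E c u := by
    exact_mod_cast card_Nplus_sdiff_le_disag E c u
  have h2 : ((Nminus E u ∩ C).card : ℝ) ≤ disag E c u := by
    exact_mod_cast card_Nminus_inter_le_disag E c u
  have h3 : (C.card : ℝ) ≤ (Nplus E u).card + disag E c u := by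
    exact_mod_cast card_clusterOf_le E c u
  have h4 : (N.card : ℝ) ≤ (N \ C).card + (Nminus E u ∩ C).card := by
    have : N.card ≤ (N \ C).card + (Nminus E u ∩ C).card := by
      rw [← card_sdiff_add_card_inter N C]
      exact Nat.add_le_add_left
        (card_le_card (inter_subset_inter_right (filter_subset _ _))) _
    exact_mod_cast this
  have hv : ∀ v ∈ N \ C, (3 / 20 : ℝ) * (Nplus E u).card ≤ ((Nplus E v ∩ C).card : ℝ) := by
    intro v hv
    have hd : corrDist E u v ≤ 0.7 := (mem_filter.mp (mem_sdiff.mp hv).1).2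
    have h5 := card_inter_of_corrDist_le E hd
    have hsub : Nplus E u ∩ Nplus E v ⊆ (Nplus E v ∩ C) ∪ (Nplus E u \ C) := by
      intro w hw
      by_cases hwC : w ∈ C <;> simp_all
    have h6 : ((Nplus E u ∩ Nplus E v).card : ℝ) ≤
        (Nplus E v ∩ C).card + (Nplus E u \ C).card := by
      exact_mod_cast (card_le_card hsub).trans (card_union_le _ _)
    linarith
  have h7 : ((N \ C).card : ℝ) * (3 / 20 * (Nplus E u).card) ≤
      ∑ v ∈ N \ C, ((Nplus E v ∩ C).card : ℝ) := by
    have := card_nsmul_le_sum (N \ C) (fun v => ((Nplus E v ∩ C).card : ℝ)) _ hv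
    rwa [nsmul_eq_mul] at this
  have hD : (0 : ℝ) ≤ (Nplus E u).card := by positivity
  have h8 : (3 : ℝ) * (Nplus E u).card ≤ (N \ C).card := by linarith
  have h9 : (C.card : ℝ) ≤ 23 / 20 * (Nplus E u).card := by linarith
  have h10 := mul_le_mul_of_nonneg_right h8 (by positivity : (0 : ℝ) ≤ 3 / 20 * (Nplus E u).card)
  have h11 := mul_le_mul_of_nonneg_left h9 hD
  nlinarith

/-- The `ℓ_p` form of `light_cluster_sum`; the factor `|C|` on the left pays for all light vertices
of the cluster at once. -/
lemma light_cluster_rpow (E : V → V → Prop) [DecidableRel E]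
    (hsymm : ∀ u v, E u v ↔ E v u) (p : ℝ) (hp : 1 ≤ p) (c : V → V) (u : V) (hu : u ∈ R1set E)
    (hl : (disag E c u : ℝ) < 3 / 20 * (Nplus E u).card) :
    ((clusterOf c u).card : ℝ) * ((Nplus E u).card : ℝ) ^ p ≤
      4 ^ p * ∑ w ∈ clusterOf c u, (disag E c w : ℝ) ^ p := by
  have h1 := light_cluster_sum E hsymm c u hu hl
  have hC : (0 : ℝ) < (clusterOf c u).card := by
    exact_mod_cast card_pos.mpr ⟨u, by simp [clusterOf]⟩
  have h2 := Real.rpow_sum_le_const_mul_sum_rpow (clusterOf c u) (fun w => (disag E c w : ℝ)) hp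
  simp only [Nat.abs_cast] at h2
  have h3 : ((Nplus E u).card * (clusterOf c u).card : ℝ) ^ p ≤
      (4 * ∑ w ∈ clusterOf c u, (disag E c w : ℝ)) ^ p :=
    Real.rpow_le_rpow (by positivity) (by linarith) (by linarith)
  rw [Real.mul_rpow (by positivity) (by positivity),
    Real.mul_rpow (by positivity) (by positivity)] at h3
  have h4 : ((clusterOf c u).card : ℝ) ^ p =
      ((clusterOf c u).card : ℝ) ^ (p - 1) * (clusterOf c u).card := by
    rw [Real.rpow_sub_one hC.ne']
    field_simp
  have h5 : (0 : ℝ) < ((clusterOf c u).card : ℝ) ^ (p - 1) := by positivity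
  have h6 : (0 : ℝ) < (4 : ℝ) ^ p := by positivity
  have h7 := mul_le_mul_of_nonneg_left h2 h6.le
  refine le_of_mul_le_mul_left ?_ h5
  rw [h4] at h3
  linarith

/-- The bound for an arbitrary clustering. -/
lemma R1_bound_clustering (E : V → V → Prop) [DecidableRel E]
    (hsymm : ∀ u v, E u v ↔ E v u) (p : ℝ) (hp : 1 ≤ p) (c : V → V) :
    ∑ u ∈ R1set E, ((Nplus E u).card : ℝ) ^ p ≤
      ((20 / 3 : ℝ) ^ p + (4 : ℝ) ^ p) * ∑ u, (disag E c u : ℝ) ^ p := by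
  rw [← sum_filter_add_sum_filter_not (R1set E)
    (fun u => (disag E c u : ℝ) < 3 / 20 * (Nplus E u).card), add_mul, add_comm]
  apply add_le_add
  · rw [mul_sum]
    refine (sum_le_sum ?_).trans (sum_le_sum_of_subset_of_nonneg (subset_univ _) ?_)
    · intro u hu
      have hh := (mem_filter.mp hu).2
      rw [← Real.mul_rpow (by norm_num) (by positivity)]
      exact Real.rpow_le_rpow (by positivity) (by linarith) (by linarith)
    · intros
      positivity
  · rw [← sum_fiberwise _ c, ← sum_fiberwise univ c (fun u => (disag E c u : ℝ) ^ p), mul_sum]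
    apply sum_le_sum
    intro k _
    set S := ((R1set E).filter
      (fun u => (disag E c u : ℝ) < 3 / 20 * (Nplus E u).card)).filter (fun u => c u = k) with hS
    rcases S.eq_empty_or_nonempty with h0 | hne
    · rw [h0, sum_empty]
      exact mul_nonneg (by positivity) (sum_nonneg fun _ _ => by positivity)
    -- Every light vertex of the cluster is charged against the one of largest positive degree.
    · obtain ⟨u, huS, hmax⟩ := exists_max_image S (fun u => (Nplus E u).card) hne
      have huS' := huS
      simp only [hS, mem_filter] at huS'
      obtain ⟨⟨huR, hl⟩, hk⟩ := huS'
      have hfib : univ.filter (fun w => c w = k) = clusterOf c u := by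
        simp [clusterOf, hk]
      rw [hfib]
      refine le_trans ?_ (light_cluster_rpow E hsymm p hp c u huR hl)
      have h1 : ∑ v ∈ S, ((Nplus E v).card : ℝ) ^ p ≤ S.card • ((Nplus E u).card : ℝ) ^ p := by
        apply sum_le_card_nsmul
        intro v hv
        exact Real.rpow_le_rpow (by positivity) (by exact_mod_cast hmax v hv) (by linarith)
      rw [nsmul_eq_mul] at h1
      refine h1.trans (mul_le_mul_of_nonneg_right ?_ (by positivity))
      rw [← hfib]
      exact_mod_cast card_le_card (filter_subset_filter _ (subset_univ _))

/-- `Σ_{u∈R₁} |N_u^+|^p ≤ ((20/3)^p + 2 + 2·4^p) · OPT(p)^p`. -/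
theorem R1_bounding (E : V → V → Prop) [DecidableRel E]
    (hsymm : ∀ u v, E u v ↔ E v u) (p : ℝ) (hp : 1 ≤ p) :
    ∑ u ∈ R1set E, ((Nplus E u).card : ℝ) ^ p ≤
      ((20 / 3 : ℝ) ^ p + 2 + 2 * (4 : ℝ) ^ p) * OPTlp E p ^ p := by
  obtain ⟨c, -, hc⟩ := exists_mem_eq_inf' (s := (univ : Finset (V → V))) ⟨id, mem_univ id⟩
    (fun c : V → V => (∑ u, (disag E c u : ℝ) ^ p) ^ (1 / p))
  have hY : 0 ≤ ∑ u, (disag E c u : ℝ) ^ p := sum_nonneg fun _ _ => by positivity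
  have hopt : OPTlp E p ^ p = ∑ u, (disag E c u : ℝ) ^ p := by
    unfold OPTlp
    rw [hc, ← Real.rpow_mul hY, one_div_mul_cancel (by linarith), Real.rpow_one]
  rw [hopt]
  refine (R1_bound_clustering E hsymm p hp c).trans (mul_le_mul_of_nonneg_right ?_ hY)
  have : (0 : ℝ) < (4 : ℝ) ^ p := by positivity
  linarith
end
end
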